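/- Let a > 0, γ > 1 and 0 < r₀ ≤ r₁ be real constants. Then there exists a constant c > 0 (depending only on a, γ, r₀, r₁) such that for every r ∈ [r₀, r₁] and every real ρ ≥ 0 with ρ ≤ r₀/2 or ρ ≥ 2r₁ one has H(ρ, r) ≥ c |ρ − r|^γ. -/

import Mathlib

/-!
The relative entropy is homogeneous: with `t = ρ / r`,
`H(ρ, r) = a / (γ - 1) * r ^ γ * h t`, where `h t = t ^ γ - γ (t - 1) - 1`, and
`|ρ - r| ^ γ = r ^ γ * |t - 1| ^ γ`. The residual condition forces `t ≤ 1/2` or `2 ≤ t`, so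
everything reduces to the bound `c |t - 1| ^ γ ≤ h t` there (`exists_residual_bound`).
By the strict Bernoulli inequality `h (1/2)` and `h 2` are positive. Bounding `t ^ γ` from below
by its tangent at `1/2` gives `h t ≥ h (1/2) ≥ h (1/2) |t - 1| ^ γ` for `0 ≤ t ≤ 1/2`; its tangent
at `2` gives `h t ≥ (h 2 / 2 ^ γ) t ^ γ` for `t ≥ 2`.
-/

/-- The relative entropy function `H(ρ, r)` for the isentropic pressure law `p(z) = a z^γ`. -/
noncomputable def relEntropy (a γ ρ r : ℝ) : ℝ :=
  a / (γ - 1) * ρ ^ γ - a * γ / (γ - 1) * r ^ (γ - 1) * (ρ - r) - a / (γ - 1) * r ^ γ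

/-- The graph of the convex function `t ↦ t ^ γ` on `[0, ∞)` lies above its tangent at `s`. -/
lemma rpow_tangent_le {γ s t : ℝ} (hγ : 1 < γ) (hs : 0 < s) (ht : 0 ≤ t) :
    s ^ γ + γ * s ^ (γ - 1) * (t - s) ≤ t ^ γ := by
  have hb := one_add_mul_self_le_rpow_one_add (s := t / s - 1) (p := γ)
    (by linarith [div_nonneg ht hs.le]) hγ.le
  rw [add_sub_cancel, Real.div_rpow ht hs.le, le_div_iff₀ (Real.rpow_pos_of_pos hs γ)] at hb
  have hpow : s ^ γ = s ^ (γ - 1) * s := by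
    rw [← Real.rpow_add_one hs.ne', sub_add_cancel]
  calc s ^ γ + γ * s ^ (γ - 1) * (t - s) = (1 + γ * (t / s - 1)) * s ^ γ := by
        rw [hpow]; field_simp
    _ ≤ t ^ γ := hb

/-- The residual lower bound in the normalised case `r = 1`. -/
lemma exists_residual_bound {γ : ℝ} (hγ : 1 < γ) :
    ∃ c : ℝ, 0 < c ∧ ∀ t : ℝ, 0 ≤ t → (t ≤ 1 / 2 ∨ 2 ≤ t) →
      c * |t - 1| ^ γ ≤ t ^ γ - γ * (t - 1) - 1 := by
  have h1 : 0 < (1 / 2 : ℝ) ^ γ + γ / 2 - 1 := by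
    have := one_add_mul_self_lt_rpow_one_add (s := -(1 / 2)) (p := γ)
      (by norm_num) (by norm_num) hγ
    rw [show (1 : ℝ) + -(1 / 2) = 1 / 2 by norm_num] at this
    linarith
  have h2 : 0 < (2 : ℝ) ^ γ - γ - 1 := by
    have := one_add_mul_self_lt_rpow_one_add (s := 1) (p := γ) (by norm_num) (by norm_num) hγ
    rw [show (1 : ℝ) + 1 = 2 by norm_num] at this
    linarith
  have hp : (0 : ℝ) < 2 ^ γ := by positivity
  refine ⟨min ((1 / 2 : ℝ) ^ γ + γ / 2 - 1) (((2 : ℝ) ^ γ - γ - 1) / 2 ^ γ),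
    lt_min h1 (div_pos h2 hp), fun t ht hres => ?_⟩
  have hx0 : 0 ≤ |t - 1| ^ γ := by positivity
  rcases hres with hle | hge
  · have hx1 : |t - 1| ^ γ ≤ 1 :=
      Real.rpow_le_one (abs_nonneg _) (abs_le.2 ⟨by linarith, by linarith⟩) (by linarith)
    have hT := rpow_tangent_le (s := 1 / 2) hγ (by norm_num) ht
    have hs : (1 / 2 : ℝ) ^ (γ - 1) ≤ 1 :=
      Real.rpow_le_one (by norm_num) (by norm_num) (by linarith)
    have hprod : 0 ≤ γ * ((1 - (1 / 2 : ℝ) ^ (γ - 1)) * (1 / 2 - t)) :=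
      mul_nonneg (by linarith) (mul_nonneg (by linarith) (by linarith))
    calc _ ≤ ((1 / 2 : ℝ) ^ γ + γ / 2 - 1) * |t - 1| ^ γ :=
          mul_le_mul_of_nonneg_right (min_le_left _ _) hx0
      _ ≤ (1 / 2 : ℝ) ^ γ + γ / 2 - 1 := mul_le_of_le_one_right h1.le hx1
      _ ≤ _ := by linarith
  · have hxt : |t - 1| ^ γ ≤ t ^ γ :=
      Real.rpow_le_rpow (abs_nonneg _) (abs_le.2 ⟨by linarith, by linarith⟩) (by linarith)
    have hT := rpow_tangent_le (s := 2) hγ (by norm_num) ht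
    have hpow : (2 : ℝ) ^ (γ - 1) = 2 ^ γ / 2 := Real.rpow_sub_one (by norm_num) γ
    rw [hpow] at hT
    have hprod : 0 ≤ γ * ((γ - 1) * (t - 2)) :=
      mul_nonneg (by linarith) (mul_nonneg (by linarith) (by linarith))
    calc _ ≤ ((2 : ℝ) ^ γ - γ - 1) / 2 ^ γ * |t - 1| ^ γ :=
          mul_le_mul_of_nonneg_right (min_le_right _ _) hx0
      _ ≤ ((2 : ℝ) ^ γ - γ - 1) / 2 ^ γ * t ^ γ :=
          mul_le_mul_of_nonneg_left hxt (div_pos h2 hp).le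
      _ = t ^ γ - (γ + 1) / 2 ^ γ * t ^ γ := by field_simp; ring
      -- The factor `(γ + 1) / 2 ^ γ` rescales the tangent so that its value at `2` is `γ + 1`,
      -- with slope `γ (γ + 1) / 2 ≥ γ`.
      _ ≤ t ^ γ - (γ + 1) / 2 ^ γ * (2 ^ γ + γ * (2 ^ γ / 2) * (t - 2)) := by
          have : 0 ≤ (γ + 1) / (2 : ℝ) ^ γ := div_nonneg (by linarith) hp.le
          gcongr
      _ = t ^ γ - (γ + 1) * (1 + γ / 2 * (t - 2)) := by field_simp
      _ ≤ _ := by linarith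

theorem relEntropy_lower_bound_residual (a γ r₀ r₁ : ℝ)
    (ha : 0 < a) (hγ : 1 < γ) (hr₀ : 0 < r₀) (hr₀r₁ : r₀ ≤ r₁) :
    ∃ c : ℝ, 0 < c ∧ ∀ r ρ : ℝ, r ∈ Set.Icc r₀ r₁ → 0 ≤ ρ →
      (ρ ≤ r₀ / 2 ∨ 2 * r₁ ≤ ρ) →
      c * |ρ - r| ^ γ ≤ relEntropy a γ ρ r := by
  obtain ⟨c, hc, H⟩ := exists_residual_bound hγ
  have hk : 0 < a / (γ - 1) := div_pos ha (by linarith)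
  refine ⟨a / (γ - 1) * c, mul_pos hk hc, fun r ρ hr hρ hres => ?_⟩
  have hr0 : 0 < r := hr₀.trans_le hr.1
  obtain ⟨t, rfl⟩ : ∃ t, ρ = r * t := ⟨ρ / r, by field_simp⟩
  have ht : 0 ≤ t := nonneg_of_mul_nonneg_right hρ hr0
  have hres' : t ≤ 1 / 2 ∨ 2 ≤ t := by
    refine hres.imp (fun h => ?_) (fun h => ?_)
    · exact le_of_mul_le_mul_left (by linarith [hr.1]) hr0
    · exact le_of_mul_le_mul_left (by linarith [hr.2]) hr0
  have habs : |r * t - r| ^ γ = r ^ γ * |t - 1| ^ γ := by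
    rw [show r * t - r = r * (t - 1) by ring, abs_mul, abs_of_pos hr0,
      Real.mul_rpow hr0.le (abs_nonneg _)]
  have hent : relEntropy a γ (r * t) r =
      a / (γ - 1) * r ^ γ * (t ^ γ - γ * (t - 1) - 1) := by
    have hpow : r ^ γ = r ^ (γ - 1) * r := by
      rw [← Real.rpow_add_one hr0.ne', sub_add_cancel]
    rw [relEntropy, Real.mul_rpow hr0.le ht, hpow]
    ring
  rw [habs, hent]
  calc a / (γ - 1) * c * (r ^ γ * |t - 1| ^ γ)
      = a / (γ - 1) * r ^ γ * (c * |t - 1| ^ γ) := by ring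
    _ ≤ _ := mul_le_mul_of_nonneg_left (H t ht hres') (by positivity)
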